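/- Every multiset of size nq in AG(2,q) admitting fewer than 3 special directions is a union of n (not necessarily distinct) lines whose slopes take at most 2 distinct values; that is, it equals, as a multiset, a sum of n multisets each consisting of all q points of an affine line with multiplicity one, the lines coming from at most 2 parallel classes. -/

import Mathlib

/-!
Since `|M| = nq`, a non-special direction is one all of whose lines carry exactly `n` points.
Choose two distinct directions `d₁ ≠ d₂` containing all special ones. Counting the points of `M`
on the `q + 1` lines through a point `P` (`sum_lineCount`) gives
`q · mult(P) + n = c₁(P) + c₂(P)`, where `cᵢ(P)` is the number of points of `M` on the line of
slope `dᵢ` through `P`. So in the coordinates given by the two parallel classes, `mult(P)` is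
a function of the first coordinate plus a function of the second one. Normalising by a line
of slope `d₂` with the fewest points makes both functions natural-number valued, and they are
the multiplicities with which the lines of the two classes are to be taken.
-/

attribute [local instance] Classical.propDecidable

noncomputable section

open Polynomial

variable {F : Type} [Field F]

/-- Point `P` of `AG(2,q)` lies on the line with slope `d` (`none` stands for slope `∞`)
and parameter `b`. -/
def onAffLine (d : Option F) (b : F) (P : F × F) : Prop :=
  match d with
  | some m => P.2 = m * P.1 + b
  | none => P.1 + b = 0

/-- Number of points of the multiset `M` (counted with multiplicity) on the line with
slope `d` and parameter `b`. -/
def lineCount (M : Multiset (F × F)) (d : Option F) (b : F) : ℕ :=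
  Multiset.countP (onAffLine d b) M

/-- `d` is a mod-special direction of `M` (w.r.t. the prime `p`). -/
def IsModSpecial (p : ℕ) (M : Multiset (F × F)) (d : Option F) : Prop :=
  ¬ ∀ b₁ b₂ : F, (lineCount M d b₁ : ZMod p) = (lineCount M d b₂ : ZMod p)

/-- `d` is a special direction of `M`: some line with slope `d` contains neither
`⌊|M|/q⌋` nor `⌈|M|/q⌉` points of `M`. -/
def IsSpecial [Fintype F] (M : Multiset (F × F)) (d : Option F) : Prop :=
  ¬ ∀ b : F, lineCount M d b = Multiset.card M / Fintype.card F ∨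
      lineCount M d b = (Multiset.card M + Fintype.card F - 1) / Fintype.card F

/-- The multiset of the `q` points of an affine line, each with multiplicity one. -/
def affLine [Fintype F] (d : Option F) (b : F) : Multiset (F × F) :=
  (Finset.univ.filter (onAffLine d b)).val

/-- The projection function of `M` from direction `d`: the unique polynomial of degree
at most `q - 1` whose value at each `b` is the number of points of `M` on the
corresponding line reduced modulo `p` (viewed in the prime subfield of `F`). -/
def prPoly [Fintype F] (M : Multiset (F × F)) (d : Option F) : F[X] :=
  Lagrange.interpolate Finset.univ id (fun b => (lineCount M d b : F))

/-- The parameter `b` of the line with slope `d` through `P`. -/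
def lineParam (d : Option F) (P : F × F) : F :=
  match d with
  | some m => P.2 - m * P.1
  | none => -P.1

theorem onAffLine_iff (d : Option F) (b : F) (P : F × F) :
    onAffLine d b P ↔ lineParam d P = b := by
  cases d with
  | none =>
    simp only [onAffLine, lineParam]
    constructor <;> intro h <;> linear_combination -h
  | some m =>
    simp only [onAffLine, lineParam]
    constructor <;> intro h <;> linear_combination h

/-- Exactly one line joins two distinct points. -/
theorem card_joining_directions [Fintype F] {P Q : F × F} (h : Q ≠ P) :
    (Finset.univ.filter (fun d : Option F => lineParam d Q = lineParam d P)).card = 1 := by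
  rw [Finset.card_eq_one]
  obtain ⟨x, y⟩ := P
  obtain ⟨u, v⟩ := Q
  by_cases hx : u = x
  · subst hx
    refine ⟨none, ?_⟩
    ext d
    rw [Finset.mem_filter, Finset.mem_singleton]
    cases d with
    | none => simp [lineParam]
    | some m =>
      have : v ≠ y := fun hv => h (by rw [hv])
      simp [lineParam, this]
  · have hx' : u - x ≠ 0 := sub_ne_zero.mpr hx
    refine ⟨some ((v - y) / (u - x)), ?_⟩
    ext d
    rw [Finset.mem_filter, Finset.mem_singleton]
    cases d with
    | none => simp [lineParam, hx]
    | some m =>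
      simp only [lineParam, Finset.mem_univ, true_and, Option.some.injEq]
      rw [eq_div_iff hx']
      constructor <;> intro h <;> linear_combination -h

/-- Double counting over the pencil of lines through `P`: each point of `M` other than `P` lies
on one of them, and each copy of `P` lies on all `q + 1`. -/
theorem sum_lineCount [Fintype F] (M : Multiset (F × F)) (P : F × F) :
    ∑ d : Option F, lineCount M d (lineParam d P) =
      Fintype.card F * M.count P + Multiset.card M := by
  induction M using Multiset.induction_on with
  | empty => simp [lineCount]
  | cons Q M ih =>
    have key : ∑ d : Option F, (if lineParam d Q = lineParam d P then 1 else 0) =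
        Fintype.card F * (if P = Q then 1 else 0) + 1 := by
      by_cases h : Q = P
      · subst h; simp
      · rw [← Finset.card_filter, card_joining_directions h, if_neg (Ne.symm h)]; simp
    simp only [lineCount] at ih ⊢
    simp only [Multiset.countP_cons, Multiset.count_cons, Finset.sum_add_distrib, ih,
      Multiset.card_cons]
    simp only [onAffLine_iff, key]
    ring

/-- Lines of distinct slopes meet. -/
theorem exists_lineParam_eq {d₁ d₂ : Option F} (h : d₁ ≠ d₂) (b₁ b₂ : F) :
    ∃ P : F × F, lineParam d₁ P = b₁ ∧ lineParam d₂ P = b₂ := by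
  cases d₁ with
  | none =>
    cases d₂ with
    | none => exact absurd rfl h
    | some m => exact ⟨(-b₁, b₂ - m * b₁), by simp [lineParam]⟩
  | some k =>
    cases d₂ with
    | none => exact ⟨(-b₂, b₁ - k * b₂), by simp [lineParam]⟩
    | some m =>
      have hk : m - k ≠ 0 := sub_ne_zero.mpr (fun e => h (by rw [e]))
      refine ⟨((b₁ - b₂) / (m - k), b₁ + k * ((b₁ - b₂) / (m - k))), ?_, ?_⟩
      · simp [lineParam]
      · simp only [lineParam]
        field_simp
        ring

theorem count_affLine [Fintype F] (d : Option F) (b : F) (P : F × F) :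
    (affLine d b).count P = if lineParam d P = b then 1 else 0 := by
  have hnd : (affLine d b).Nodup := Finset.nodup _
  rw [Multiset.count_eq_of_nodup hnd]
  simp [affLine, onAffLine_iff]

theorem card_affLine [Fintype F] (d : Option F) (b : F) :
    Multiset.card (affLine d b) = Fintype.card F := by
  change (Finset.univ.filter (onAffLine d b)).card = _
  rw [← Finset.card_univ]
  symm
  cases d with
  | none =>
    refine Finset.card_bij (fun t _ => (-b, t)) ?_ ?_ ?_
    · intro t _; simp [onAffLine]
    · intro s _ t _ hst; simpa using hst
    · rintro ⟨x, y⟩ hP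
      have hP' : x + b = 0 := by simpa [onAffLine] using hP
      exact ⟨y, Finset.mem_univ _, by rw [eq_neg_of_add_eq_zero_left hP']⟩
  | some m =>
    refine Finset.card_bij (fun t _ => (t, m * t + b)) ?_ ?_ ?_
    · intro t _; simp [onAffLine]
    · intro s _ t _ hst; exact (Prod.ext_iff.mp hst).1
    · rintro ⟨x, y⟩ hP
      have hP' : y = m * x + b := by simpa [onAffLine] using hP
      exact ⟨x, Finset.mem_univ _, by rw [hP']⟩

theorem lineCount_of_not_isSpecial [Fintype F] {M : Multiset (F × F)} {n : ℕ}
    (hM : Multiset.card M = n * Fintype.card F) {d : Option F} (hd : ¬ IsSpecial M d) (b : F) :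
    lineCount M d b = n := by
  have hq : 0 < Fintype.card F := Fintype.card_pos
  have hceil : (n * Fintype.card F + Fintype.card F - 1) / Fintype.card F = n := by
    rw [Nat.add_sub_assoc hq, mul_comm, Nat.mul_add_div hq, Nat.div_eq_of_lt (by omega), add_zero]
  have h := not_not.mp hd b
  rw [hM, Nat.mul_div_cancel _ hq, hceil] at h
  exact h.elim id id

/-- Fewer than three directions lie in some pair of distinct directions; applied to the set of
special directions. -/
theorem exists_pair [Fintype F] (S : Finset (Option F)) (hS : S.card < 3) :
    ∃ d₁ d₂ : Option F, d₁ ≠ d₂ ∧ S ⊆ {d₁, d₂} := by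
  have h2 : 2 ≤ Fintype.card (Option F) := by
    rw [Fintype.card_option]
    have : 0 < Fintype.card F := Fintype.card_pos
    omega
  obtain ⟨T, hST, hT⟩ := Finset.exists_superset_card_eq (s := S) (n := 2) (by omega) h2
  obtain ⟨d₁, d₂, hne, rfl⟩ := Finset.card_eq_two.mp hT
  exact ⟨d₁, d₂, hne, hST⟩

/-- The multiplicity of a point in terms of the two lines through it whose slopes may be
special. -/
theorem mult_formula [Fintype F] {M : Multiset (F × F)} {n : ℕ}
    (hM : Multiset.card M = n * Fintype.card F) {d₁ d₂ : Option F} (hne : d₁ ≠ d₂)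
    (hS : Finset.univ.filter (fun d : Option F => IsSpecial M d) ⊆ {d₁, d₂}) (P : F × F) :
    Fintype.card F * M.count P + n =
      lineCount M d₁ (lineParam d₁ P) + lineCount M d₂ (lineParam d₂ P) := by
  have hsum := sum_lineCount M P
  have hrest : ∑ d ∈ ({d₁, d₂} : Finset (Option F))ᶜ, lineCount M d (lineParam d P) =
      ((Fintype.card F + 1) - 2) * n := by
    rw [Finset.sum_congr rfl (g := fun _ => n)]
    · rw [Finset.sum_const, Finset.card_compl, Finset.card_pair hne, Fintype.card_option,
        smul_eq_mul]
    · intro d hd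
      refine lineCount_of_not_isSpecial hM (fun hsp => ?_) _
      exact Finset.mem_compl.mp hd (hS (by simpa using hsp))
  rw [← Finset.sum_add_sum_compl ({d₁, d₂} : Finset (Option F)), hrest, Finset.sum_pair hne,
    hM] at hsum
  obtain ⟨k, hk⟩ : ∃ k, Fintype.card F = k + 1 :=
    Nat.exists_eq_add_one.mpr Fintype.card_pos
  have hk2 : Fintype.card F + 1 - 2 = k := by omega
  rw [hk2, hk] at hsum
  rw [hk]
  linarith

theorem stmt6 (p h n : ℕ) [Fact p.Prime] (hh : 1 ≤ h)
    (F : Type) [Field F] [Fintype F] [CharP F p] (hcard : Fintype.card F = p ^ h)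
    (M : Multiset (F × F)) (hM : Multiset.card M = n * Fintype.card F)
    (hfew : (Finset.univ.filter (fun d : Option F => IsSpecial M d)).card < 3) :
    ∃ L : Multiset (Option F × F), Multiset.card L = n ∧
      (L.map Prod.fst).toFinset.card ≤ 2 ∧
      M = (L.map (fun l => affLine l.1 l.2)).sum := by
  obtain ⟨d₁, d₂, hne, hS⟩ := exists_pair _ hfew
  have hq : 0 < Fintype.card F := Fintype.card_pos
  have hf := mult_formula hM hne hS
  choose pt hpt₁ hpt₂ using exists_lineParam_eq hne
  obtain ⟨b₀, hb₀⟩ := Finite.exists_min (lineCount M d₂)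
  have hpt : ∀ b₁ b₂, Fintype.card F * M.count (pt b₁ b₂) + n =
      lineCount M d₁ b₁ + lineCount M d₂ b₂ := by
    intro b₁ b₂
    rw [hf, hpt₁, hpt₂]
  have hle : ∀ b, M.count (pt 0 b₀) ≤ M.count (pt 0 b) := by
    intro b
    refine Nat.le_of_mul_le_mul_left ?_ hq
    have h1 := hpt 0 b₀
    have h2 := hpt 0 b
    have h3 := hb₀ b
    omega
  -- The multiplicities of the lines of slope `d₁` and `d₂`.
  let a : F → ℕ := fun b => M.count (pt b b₀)
  let e : F → ℕ := fun b => M.count (pt 0 b) - M.count (pt 0 b₀)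
  have hdec : ∀ P, M.count P = a (lineParam d₁ P) + e (lineParam d₂ P) := by
    intro P
    have hmul : M.count P + M.count (pt 0 b₀) =
        M.count (pt (lineParam d₁ P) b₀) + M.count (pt 0 (lineParam d₂ P)) := by
      refine Nat.eq_of_mul_eq_mul_left hq ?_
      have h0 := hf P
      have h1 := hpt (lineParam d₁ P) b₀
      have h2 := hpt 0 (lineParam d₂ P)
      have h3 := hpt 0 b₀
      rw [mul_add, mul_add]
      omega
    have := hle (lineParam d₂ P)
    simp only [a, e]
    omega
  let L : Multiset (Option F × F) :=
    ∑ b : F, (Multiset.replicate (a b) (d₁, b) + Multiset.replicate (e b) (d₂, b))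
  have hML : M = (L.map (fun l => affLine l.1 l.2)).sum := by
    ext P
    have hL : (L.map (fun l => affLine l.1 l.2)).sum =
        ∑ b : F, (a b • affLine d₁ b + e b • affLine d₂ b) := by
      have := map_sum ((Multiset.sumAddMonoidHom (M := Multiset (F × F))).comp
        (Multiset.mapAddMonoidHom (fun l : Option F × F => affLine l.1 l.2)))
        (fun b : F => Multiset.replicate (a b) (d₁, b) + Multiset.replicate (e b) (d₂, b))
        Finset.univ
      refine this.trans (Finset.sum_congr rfl fun b _ => ?_)
      simp
    rw [hL, Multiset.count_sum', hdec P]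
    simp [Multiset.count_add, Multiset.count_nsmul, count_affLine, Finset.sum_add_distrib]
  refine ⟨L, ?_, ?_, hML⟩
  · have hc := congrArg Multiset.card hML
    have hconst : ∀ K : Multiset (Option F × F),
        Multiset.card (K.map (fun l => affLine l.1 l.2)).sum =
          Multiset.card K * Fintype.card F := by
      intro K
      induction K using Multiset.induction_on with
      | empty => simp
      | cons l K ih => simp [ih, card_affLine]; ring
    rw [hM, hconst] at hc
    exact (Nat.eq_of_mul_eq_mul_right hq hc).symm
  · refine (Finset.card_le_card (t := {d₁, d₂}) ?_).trans Finset.card_le_two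
    intro d hd
    obtain ⟨l, hl, rfl⟩ := Multiset.mem_map.mp (Multiset.mem_toFinset.mp hd)
    obtain ⟨b, -, hb⟩ := Multiset.mem_sum.mp hl
    rcases Multiset.mem_add.mp hb with hb | hb <;>
      simp [Multiset.eq_of_mem_replicate hb]

end
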